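/- Let F : ℝ^m → ℝ be L-smooth. Let (z_k) be generated by z_{k+1} = z_k + t_k s_k with step sizes t_k > 0, where for each k the direction s_k and an inexact gradient g_k satisfy ‖g_k − ∇F(z_k)‖₂ ≤ δ_k, c₁‖g_k‖₂² ≤ −g_kᵀ s_k, and ‖s_k‖₂ ≤ c₂‖g_k‖₂ for constants c₁ > 0, c₂ > 0 and tolerances δ_k ≥ 0. Then for every k, F(z_{k+1}) ≤ F(z_k) − t_k (c₁ − c₂² (L+1) t_k / 2) ‖g_k‖₂² + δ_k²/2. -/

import Mathlib

open scoped RealInnerProductSpace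

theorem descent_aux {m : ℕ} (F : EuclideanSpace ℝ (Fin m) → ℝ) (L : ℝ)
    (hdiff : Differentiable ℝ F)
    (hlip : ∀ x y : EuclideanSpace ℝ (Fin m), ‖gradient F x - gradient F y‖ ≤ L * ‖x - y‖)
    (x d : EuclideanSpace ℝ (Fin m)) :
    F (x + d) ≤ F x + ⟪gradient F x, d⟫ + L / 2 * ‖d‖ ^ 2 := by
  have hf : ∀ u : ℝ, HasDerivAt (fun u : ℝ => F (x + u • d)) ⟪gradient F (x + u • d), d⟫ u := by
    intro u
    have h1 : HasDerivAt (fun u : ℝ => x + u • d) d u := by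
      simpa using ((hasDerivAt_id u).smul_const d).const_add x
    have h2 := (hdiff (x + u • d)).hasGradientAt.hasFDerivAt.comp_hasDerivAt u h1
    exact h2
  have hB : ∀ u : ℝ, HasDerivAt
      (fun u : ℝ => F x + u * ⟪gradient F x, d⟫ + L / 2 * ‖d‖ ^ 2 * u ^ 2)
      (⟪gradient F x, d⟫ + L * ‖d‖ ^ 2 * u) u := by
    intro u
    have h := (((hasDerivAt_id u).mul_const ⟪gradient F x, d⟫).const_add (F x)).add
      ((hasDerivAt_pow 2 u).const_mul (L / 2 * ‖d‖ ^ 2))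
    refine h.congr_deriv ?_
    simp
    ring
  have key := image_le_of_deriv_right_le_deriv_boundary (a := 0) (b := 1)
    (fun u _ => (hf u).continuousAt.continuousWithinAt)
    (fun u _ => (hf u).hasDerivWithinAt)
    (by simp)
    (fun u _ => (hB u).continuousAt.continuousWithinAt)
    (fun u _ => (hB u).hasDerivWithinAt)
    (fun u hu => by
      have h1 := real_inner_le_norm (gradient F (x + u • d) - gradient F x) d
      rw [inner_sub_left] at h1
      have h2 := hlip (x + u • d) x
      rw [add_sub_cancel_left, norm_smul, Real.norm_of_nonneg hu.1] at h2
      have h3 := mul_le_mul_of_nonneg_right h2 (norm_nonneg d)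
      nlinarith) (Set.right_mem_Icc.2 (zero_le_one (α := ℝ)))
  simpa using key

/-- basic descent inequality for the inexact general descent method. -/
theorem stmt_2 (m : ℕ) (F : EuclideanSpace ℝ (Fin m) → ℝ) (L : ℝ)
    (hdiff : Differentiable ℝ F)
    (hlip : ∀ x y : EuclideanSpace ℝ (Fin m), ‖gradient F x - gradient F y‖ ≤ L * ‖x - y‖)
    (z s g : ℕ → EuclideanSpace ℝ (Fin m)) (t δ : ℕ → ℝ)
    (c₁ c₂ : ℝ) (hc₁ : 0 < c₁) (hc₂ : 0 < c₂)
    (ht : ∀ k, 0 < t k) (hδ : ∀ k, 0 ≤ δ k)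
    (hupd : ∀ k, z (k + 1) = z k + t k • s k)
    (herr : ∀ k, ‖g k - gradient F (z k)‖ ≤ δ k)
    (hdesc : ∀ k, c₁ * ‖g k‖ ^ 2 ≤ -⟪g k, s k⟫)
    (hbnd : ∀ k, ‖s k‖ ≤ c₂ * ‖g k‖) :
    ∀ k, F (z (k + 1)) ≤
      F (z k) - t k * (c₁ - c₂ ^ 2 * (L + 1) * t k / 2) * ‖g k‖ ^ 2 + (δ k) ^ 2 / 2 := by
  intro k
  have h := descent_aux F L hdiff hlip (z k) (t k • s k)
  rw [← hupd k, inner_smul_right, norm_smul, Real.norm_of_nonneg (ht k).le] at h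
  have h1 := real_inner_le_norm (gradient F (z k) - g k) (s k)
  rw [inner_sub_left, norm_sub_rev] at h1
  have h2 := mul_le_mul_of_nonneg_right (herr k) (norm_nonneg (s k))
  have htk := ht k
  have h3 : t k * ⟪gradient F (z k), s k⟫ ≤ t k * (-(c₁ * ‖g k‖ ^ 2) + δ k * ‖s k‖) :=
    mul_le_mul_of_nonneg_left (by linarith [hdesc k]) htk.le
  have h4 := sq_nonneg (δ k - t k * ‖s k‖)
  have h5 : (L + 1) * ‖s k‖ ^ 2 ≤ (L + 1) * (c₂ * ‖g k‖) ^ 2 := by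
    by_cases hs : s k = 0
    · have hd := hdesc k
      rw [hs, inner_zero_right] at hd
      have hg : ‖g k‖ ^ 2 = 0 := by
        have := sq_nonneg ‖g k‖
        nlinarith
      rw [mul_pow, hg, hs]
      simp
    · have hL : 0 ≤ L := by
        have h6 := (norm_nonneg _).trans (hlip (s k) 0)
        rw [sub_zero] at h6
        exact nonneg_of_mul_nonneg_left h6 (norm_pos_iff.2 hs)
      exact mul_le_mul_of_nonneg_left
        (pow_le_pow_left₀ (norm_nonneg _) (hbnd k) 2) (by linarith)
  have h7 := mul_le_mul_of_nonneg_left h5 (by positivity : 0 ≤ t k ^ 2 / 2)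
  nlinarith
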